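/- arXiv:2403.00478 — 11 statements merged into one kernel-verified Lean document; each statement's English description precedes it below -/
import Mathlib

section
/- There exist only finitely many pairs (m, w) with 4 ≤ w ≤ m − 2 for which an I(m, w) admissible set exists. That is, the set of pairs (m, w) of natural numbers satisfying 4 ≤ w ≤ m − 2 such that some admissible I(m, w) set exists is finite. -/
/-!
The set of realisable pairs `(m, w)` is closed under `(m, w) ↦ (m - 1, w)` (keep the supports
avoiding a coordinate) and under `(m, w) ↦ (m - 1, w - 1)` (keep the supports through a
coordinate and erase it: there all the values are nonzero, so it never prevents a clash). Writing
`d = m - w`, a pair with `4 ≤ w` and `2 ≤ d` therefore forces the pairs with `w = 4` and the same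
`d`, and with `d = 2` and the same `w`. So it is enough to refute one pair with `w = 4` and one
with `d = 2`, and both come from Ramsey's theorem.

* `exists_not_good_four`: for `m` large, all `4`-subsets of some 6-element set carry the same word
  `t₁t₂t₃t₄` (values read in increasing order). If two adjacent letters agree, the three 4-sets
  obtained by adding two fixed elements to the pairs of `{x, y, z}` clash; otherwise `t₁ = t₃`
  and `t₂ = t₄`, and `{1,2,3,4}, {1,2,5,6}, {3,4,5,6}` clash.
* `exists_not_good_codim_two`: supports are complements of pairs. For `m` large there is a 6-element
  set on which the value of the vector missing `{i, j}` at a third element `k` only depends on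
  whether `k` lies before, between or after `i, j`; call these values `α, β, γ`. If `α = β` or
  `β = γ`, the vectors missing three edges of a star clash; otherwise `α = γ`, and the vectors
  missing three consecutive disjoint pairs clash.

The homogeneous sets are found with a nonprincipal ultrafilter on `ℕ`: a finite colouring is
eventually constant, and nested "eventually" quantifiers commute with conjunction. Taking `m` itself
as the innermost variable disposes of the dependence of the colouring on `m`.
-/


/-- The support of a vector `v ∈ {0,1,2}^m`: the set of coordinates where `v` is nonzero. -/
def Supp {m : ℕ} (v : Fin m → Fin 3) : Finset (Fin m) :=
  Finset.univ.filter (fun i => v i ≠ 0)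

/-- Exactly one of the three values `a`, `b`, `c` is nonzero. -/
def ExactlyOneNonzero (a b c : Fin 3) : Prop :=
  (a ≠ 0 ∧ b = 0 ∧ c = 0) ∨ (a = 0 ∧ b ≠ 0 ∧ c = 0) ∨ (a = 0 ∧ b = 0 ∧ c ≠ 0)

/-- Two vectors form a clash if the support of one is contained in the support of the other. -/
def Clash2 {m : ℕ} (v₁ v₂ : Fin m → Fin 3) : Prop :=
  Supp v₁ ⊆ Supp v₂ ∨ Supp v₂ ⊆ Supp v₁

/-- Three vectors form a clash if there is no coordinate at which exactly one of them is
nonzero and no coordinate at which the three values are pairwise distinct. -/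
def Clash3 {m : ℕ} (v₁ v₂ v₃ : Fin m → Fin 3) : Prop :=
  (¬ ∃ i, ExactlyOneNonzero (v₁ i) (v₂ i) (v₃ i)) ∧
  (¬ ∃ i, v₁ i ≠ v₂ i ∧ v₁ i ≠ v₃ i ∧ v₂ i ≠ v₃ i)

/-- A set of vectors is admissible if no two and no three of its elements form a clash. -/
def IsAdmissible {m : ℕ} (A : Set (Fin m → Fin 3)) : Prop :=
  (∀ v₁ ∈ A, ∀ v₂ ∈ A, v₁ ≠ v₂ → ¬ Clash2 v₁ v₂) ∧
  (∀ v₁ ∈ A, ∀ v₂ ∈ A, ∀ v₃ ∈ A, v₁ ≠ v₂ → v₁ ≠ v₃ → v₂ ≠ v₃ → ¬ Clash3 v₁ v₂ v₃)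

/-- `A` is an `I(m,w)` set: for every `w`-element subset `S` of `[m]` it contains exactly one
vector with support `S`, and it contains no other vectors. -/
def IsISet (m w : ℕ) (A : Set (Fin m → Fin 3)) : Prop :=
  (∀ S : Finset (Fin m), S.card = w → ∃! v, v ∈ A ∧ Supp v = S) ∧
  (∀ v ∈ A, (Supp v).card = w)

/-- The list of nonzero values of `v`, read in increasing order of position. -/
def nonzeroValues {m : ℕ} (v : Fin m → Fin 3) : List (Fin 3) :=
  ((Supp v).sort (· ≤ ·)).map v

/-- `v` is of type `t` if `v` has at least `t.length` nonzero coordinates and the `i`-th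
nonzero value of `v` (in increasing order of position) is `t i`, i.e. `t` is a prefix of the
list of nonzero values of `v`. -/
def IsOfType {m : ℕ} (v : Fin m → Fin 3) (t : List (Fin 3)) : Prop :=
  t <+: nonzeroValues v

/-- `S₁, S₂, S₃` form a type `t` clash: whenever `v₁, v₂, v₃` have supports `S₁, S₂, S₃`
respectively and are all of type `t`, they form a clash. -/
def TypedClash {m : ℕ} (t : List (Fin 3)) (S₁ S₂ S₃ : Finset (Fin m)) : Prop :=
  ∀ v₁ v₂ v₃ : Fin m → Fin 3, Supp v₁ = S₁ → Supp v₂ = S₂ → Supp v₃ = S₃ →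
    IsOfType v₁ t → IsOfType v₂ t → IsOfType v₃ t → Clash3 v₁ v₂ v₃

open Filter

/-! ### Heredity of admissible families -/

/-- The combinatorial core of an admissible `I(m, w)` set: `f S` encodes the nonzero values (as
Booleans) of the vector with support `S`, and any three distinct `w`-subsets of `{0, …, m - 1}` are
separated by a point lying in exactly one of them, or in exactly two of them with different
values. The values of `f S` off `S` are irrelevant. -/
def Good (m w : ℕ) : Prop :=
  ∃ f : Finset ℕ → ℕ → Bool, ∀ S₁ S₂ S₃ : Finset ℕ,
    S₁ ⊆ Finset.range m → S₂ ⊆ Finset.range m → S₃ ⊆ Finset.range m →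
    S₁.card = w → S₂.card = w → S₃.card = w → S₁ ≠ S₂ → S₁ ≠ S₃ → S₂ ≠ S₃ →
    ∃ i, (i ∈ S₁ ∧ i ∉ S₂ ∧ i ∉ S₃) ∨ (i ∉ S₁ ∧ i ∈ S₂ ∧ i ∉ S₃) ∨ (i ∉ S₁ ∧ i ∉ S₂ ∧ i ∈ S₃) ∨
      (i ∈ S₁ ∧ i ∈ S₂ ∧ i ∉ S₃ ∧ f S₁ i ≠ f S₂ i) ∨
      (i ∈ S₁ ∧ i ∉ S₂ ∧ i ∈ S₃ ∧ f S₁ i ≠ f S₃ i) ∨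
      (i ∉ S₁ ∧ i ∈ S₂ ∧ i ∈ S₃ ∧ f S₂ i ≠ f S₃ i)

theorem Good.mono {m m' w : ℕ} (h : Good m w) (hm : m' ≤ m) : Good m' w := by
  obtain ⟨f, hf⟩ := h
  have hs := Finset.range_subset_range.2 hm
  exact ⟨f, fun S₁ S₂ S₃ h1 h2 h3 => hf S₁ S₂ S₃ (h1.trans hs) (h2.trans hs) (h3.trans hs)⟩

/-- The supports through the last coordinate, with that coordinate erased. -/
theorem Good.link {m w : ℕ} (h : Good (m + 1) (w + 1)) : Good m w := by
  obtain ⟨f, hf⟩ := h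
  refine ⟨fun S => f (insert m S), fun S₁ S₂ S₃ h1 h2 h3 c1 c2 c3 n1 n2 n3 => ?_⟩
  have key : ∀ S : Finset ℕ, S ⊆ Finset.range m → m ∉ S := fun S hS hm => by
    simpa using hS hm
  have sub : ∀ S : Finset ℕ, S ⊆ Finset.range m → insert m S ⊆ Finset.range (m + 1) :=
    fun S hS => by
      rw [Finset.range_add_one]
      exact Finset.insert_subset_insert _ hS
  have inj : ∀ S T : Finset ℕ, S ⊆ Finset.range m → T ⊆ Finset.range m → S ≠ T →
      insert m S ≠ insert m T := fun S T hS hT hne he => hne (by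
    rw [← Finset.erase_insert (key S hS), he, Finset.erase_insert (key T hT)])
  obtain ⟨i, hi⟩ := hf (insert m S₁) (insert m S₂) (insert m S₃) (sub _ h1) (sub _ h2) (sub _ h3)
    (by rw [Finset.card_insert_of_notMem (key _ h1), c1])
    (by rw [Finset.card_insert_of_notMem (key _ h2), c2])
    (by rw [Finset.card_insert_of_notMem (key _ h3), c3])
    (inj _ _ h1 h2 n1) (inj _ _ h1 h3 n2) (inj _ _ h2 h3 n3)
  refine ⟨i, ?_⟩
  have him : i ≠ m := by
    rintro rfl
    simp at hi
  simpa [Finset.mem_insert, him] using hi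

theorem Good.link_iter {m w : ℕ} (k : ℕ) (h : Good (m + k) (w + k)) : Good m w := by
  induction k with
  | zero => exact h
  | succ k ih => exact ih (Good.link h)

theorem good_of_admissible {m w : ℕ} {A : Set (Fin m → Fin 3)} (hI : IsISet m w A)
    (hA : IsAdmissible A) : Good m w := by
  choose! v hv _ using hI.1
  -- The trace on `Fin m` of a set of natural numbers.
  let r : Finset ℕ → Finset (Fin m) := fun S => Finset.univ.filter (fun i => (i : ℕ) ∈ S)
  have hmap : ∀ S : Finset ℕ, S ⊆ Finset.range m → (r S).map Fin.valEmbedding = S := by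
    intro S hS
    ext x
    simp only [r, Finset.mem_map, Finset.mem_filter, Finset.mem_univ, true_and,
      Fin.valEmbedding_apply]
    exact ⟨by rintro ⟨a, ha, rfl⟩; exact ha,
      fun hx => ⟨⟨x, Finset.mem_range.1 (hS hx)⟩, hx, rfl⟩⟩
  have hcard : ∀ S : Finset ℕ, S ⊆ Finset.range m → (r S).card = S.card := by
    intro S hS
    rw [← Finset.card_map Fin.valEmbedding, hmap S hS]
  have hmem : ∀ S : Finset ℕ, S ⊆ Finset.range m → S.card = w →
      ∀ i : Fin m, v (r S) i ≠ 0 ↔ (i : ℕ) ∈ S := by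
    intro S hS hc i
    have h2 := (hv (r S) ((hcard S hS).trans hc)).2
    have h3 := Finset.ext_iff.1 h2 i
    simpa [Supp, r] using h3
  have hne : ∀ S T : Finset ℕ, S ⊆ Finset.range m → T ⊆ Finset.range m → S.card = w →
      T.card = w → S ≠ T → v (r S) ≠ v (r T) := by
    intro S T hS hT cS cT hST he
    apply hST
    rw [← hmap S hS, ← hmap T hT, ← (hv (r S) ((hcard S hS).trans cS)).2,
      ← (hv (r T) ((hcard T hT).trans cT)).2, he]
  refine ⟨fun S i => if h : i < m then decide (v (r S) ⟨i, h⟩ = 1) else false,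
    fun S₁ S₂ S₃ h1 h2 h3 c1 c2 c3 n1 n2 n3 => ?_⟩
  have hcl := hA.2 _ (hv (r S₁) ((hcard _ h1).trans c1)).1 _ (hv (r S₂) ((hcard _ h2).trans c2)).1
    _ (hv (r S₃) ((hcard _ h3).trans c3)).1 (hne _ _ h1 h2 c1 c2 n1) (hne _ _ h1 h3 c1 c3 n2)
    (hne _ _ h2 h3 c2 c3 n3)
  have : ∃ i : Fin m, ExactlyOneNonzero (v (r S₁) i) (v (r S₂) i) (v (r S₃) i) ∨
      (v (r S₁) i ≠ v (r S₂) i ∧ v (r S₁) i ≠ v (r S₃) i ∧ v (r S₂) i ≠ v (r S₃) i) := by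
    by_contra hcon
    push Not at hcon
    refine hcl ⟨fun ⟨i, hi⟩ => (hcon i).1 hi, fun ⟨i, hi, hj, hk⟩ => hk ((hcon i).2 hi hj)⟩
  obtain ⟨i, hi⟩ := this
  refine ⟨i, ?_⟩
  simp only [← hmem _ h1 c1 i, ← hmem _ h2 c2 i, ← hmem _ h3 c3 i, i.2, dif_pos, Fin.eta]
  generalize v (r S₁) i = a at *
  generalize v (r S₂) i = b at *
  generalize v (r S₃) i = c at *
  clear * - hi
  unfold ExactlyOneNonzero at hi
  fin_cases a <;> fin_cases b <;> fin_cases c <;> simp at hi ⊢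

/-! ### Homogeneous sets from an ultrafilter -/

/-- A finite colouring is constant along an ultrafilter. -/
theorem exists_eventually_eq {κ : Type*} [Finite κ] (U : Ultrafilter ℕ) (g : ℕ → κ) :
    ∃ t, ∀ᶠ x in (U : Filter ℕ), g x = t := by
  obtain ⟨t, ht⟩ := Ultrafilter.eq_pure_of_finite (U.map g)
  refine ⟨t, ?_⟩
  have : ({t} : Set κ) ∈ U.map g := by
    rw [ht]
    exact Set.mem_singleton t
  exact this

theorem eventually_hyper_gt (a : ℕ) : ∀ᶠ x in (hyperfilter ℕ : Filter ℕ), a < x := by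
  have h : (hyperfilter ℕ : Filter ℕ) ≤ atTop := by
    rw [← Nat.cofinite_eq_atTop]
    exact hyperfilter_le_cofinite
  exact h (eventually_gt_atTop a)

/-- Triples `a < b < c < M` whose colour is a fixed one, for generic `a, b, c, M`. -/
theorem ramsey_three {κ : Type*} [Finite κ] (g : ℕ → ℕ → ℕ → ℕ → κ) :
    ∃ t, ∀ᶠ a in (hyperfilter ℕ : Filter ℕ), ∀ᶠ b in (hyperfilter ℕ : Filter ℕ),
      ∀ᶠ c in (hyperfilter ℕ : Filter ℕ), ∀ᶠ M in (hyperfilter ℕ : Filter ℕ),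
      (a < b ∧ b < c ∧ c < M) ∧ g a b c M = t := by
  choose g₁ h₁ using fun a b c => exists_eventually_eq (hyperfilter ℕ) (g a b c)
  choose g₂ h₂ using fun a b => exists_eventually_eq (hyperfilter ℕ) (g₁ a b)
  choose g₃ h₃ using fun a => exists_eventually_eq (hyperfilter ℕ) (g₂ a)
  obtain ⟨t, ht⟩ := exists_eventually_eq (hyperfilter ℕ) g₃
  refine ⟨t, ?_⟩
  filter_upwards [ht] with a ha
  filter_upwards [h₃ a, eventually_hyper_gt a] with b hb hab
  filter_upwards [h₂ a b, eventually_hyper_gt b] with c hc hbc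
  filter_upwards [h₁ a b c, eventually_hyper_gt c] with M hM hcM
  exact ⟨⟨hab, hbc, hcM⟩, by rw [hM, hc, hb, ha]⟩

/-- Quadruples `a < b < c < d < M` whose colour is a fixed one, for generic `a, b, c, d, M`. -/
theorem ramsey_four {κ : Type*} [Finite κ] (g : ℕ → ℕ → ℕ → ℕ → ℕ → κ) :
    ∃ t, ∀ᶠ a in (hyperfilter ℕ : Filter ℕ), ∀ᶠ b in (hyperfilter ℕ : Filter ℕ),
      ∀ᶠ c in (hyperfilter ℕ : Filter ℕ), ∀ᶠ d in (hyperfilter ℕ : Filter ℕ),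
      ∀ᶠ M in (hyperfilter ℕ : Filter ℕ),
      (a < b ∧ b < c ∧ c < d ∧ d < M) ∧ g a b c d M = t := by
  choose g₁ h₁ using fun a => ramsey_three (g a)
  obtain ⟨t, ht⟩ := exists_eventually_eq (hyperfilter ℕ) g₁
  refine ⟨t, ?_⟩
  filter_upwards [ht] with a ha
  filter_upwards [h₁ a, eventually_hyper_gt a] with b hb hab
  filter_upwards [hb] with c hc
  filter_upwards [hc] with d hd
  filter_upwards [hd] with M hM
  exact ⟨⟨hab, hM.1⟩, hM.2.trans ha⟩

/-! ### Supports of size four -/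

theorem exists_not_good_four : ∃ M, ¬ Good M 4 := by
  by_contra hcon
  push Not at hcon
  choose f hf using hcon
  obtain ⟨⟨t₁, t₂, t₃, t₄⟩, H⟩ := ramsey_four (fun a b c d M =>
    (f M {a, b, c, d} a, f M {a, b, c, d} b, f M {a, b, c, d} c, f M {a, b, c, d} d))
  simp only [Prod.mk.injEq] at H
  set Q : ℕ → ℕ → ℕ → ℕ → ℕ → Prop := fun a b c d M => (a < b ∧ b < c ∧ c < d ∧ d < M) ∧
    f M {a, b, c, d} a = t₁ ∧ f M {a, b, c, d} b = t₂ ∧ f M {a, b, c, d} c = t₃ ∧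
    f M {a, b, c, d} d = t₄ with hQ
  -- Six generic points, together with all the 4-subsets that occur below.
  have H6 : ∀ᶠ x₁ in (hyperfilter ℕ : Filter ℕ), ∀ᶠ x₂ in (hyperfilter ℕ : Filter ℕ),
      ∀ᶠ x₃ in (hyperfilter ℕ : Filter ℕ), ∀ᶠ x₄ in (hyperfilter ℕ : Filter ℕ),
      ∀ᶠ x₅ in (hyperfilter ℕ : Filter ℕ), ∀ᶠ x₆ in (hyperfilter ℕ : Filter ℕ),
      ∀ᶠ M in (hyperfilter ℕ : Filter ℕ),
      Q x₁ x₂ x₃ x₄ M ∧ Q x₁ x₂ x₃ x₅ M ∧ Q x₁ x₂ x₄ x₅ M ∧ Q x₁ x₃ x₄ x₅ M ∧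
      Q x₂ x₃ x₄ x₅ M ∧ Q x₁ x₂ x₅ x₆ M ∧ Q x₃ x₄ x₅ x₆ M := by
    simp only [eventually_and, eventually_const]
    exact ⟨H, H, H, H, H, H, H⟩
  obtain ⟨x₁, H6⟩ := H6.exists
  obtain ⟨x₂, H6⟩ := H6.exists
  obtain ⟨x₃, H6⟩ := H6.exists
  obtain ⟨x₄, H6⟩ := H6.exists
  obtain ⟨x₅, H6⟩ := H6.exists
  obtain ⟨x₆, H6⟩ := H6.exists
  obtain ⟨M, q1234, q1235, q1245, q1345, q2345, q1256, q3456⟩ := H6.exists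
  have hsub : ∀ {a b c d}, Q a b c d M → ({a, b, c, d} : Finset ℕ) ⊆ Finset.range M := by
    rintro a b c d ⟨h, -⟩ x hx
    simp only [Finset.mem_insert, Finset.mem_singleton] at hx
    rw [Finset.mem_range]
    omega
  have hcard : ∀ {a b c d}, Q a b c d M → ({a, b, c, d} : Finset ℕ).card = 4 := by
    rintro a b c d ⟨h, -⟩
    rw [Finset.card_insert_of_notMem, Finset.card_insert_of_notMem, Finset.card_pair]
    · omega
    all_goals
      simp only [Finset.mem_insert, Finset.mem_singleton]
      omega
  have hne : ∀ {S T : Finset ℕ} (x : ℕ), x ∈ S → x ∉ T → S ≠ T :=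
    fun x h h' he => h' (he ▸ h)
  have ht : t₁ = t₂ ∨ t₂ = t₃ ∨ t₃ = t₄ ∨ (t₁ = t₃ ∧ t₂ = t₄) := by
    clear * -
    revert t₁ t₂ t₃ t₄
    decide
  obtain ⟨l₁, l₂, l₃, -⟩ := q1234.1
  obtain ⟨-, l₄, l₅, -⟩ := q3456.1
  rcases ht with ht | ht | ht | ht
  ·
    -- Two fixed elements after the triangle `x₁, x₂, x₃`.
    obtain ⟨i, hi⟩ := hf M _ _ _ (hsub q1245) (hsub q1345) (hsub q2345)
      (hcard q1245) (hcard q1345) (hcard q2345)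
      (hne x₂ (by simp) (by simp only [Finset.mem_insert, Finset.mem_singleton]; omega))
      (hne x₁ (by simp) (by simp only [Finset.mem_insert, Finset.mem_singleton]; omega))
      (hne x₁ (by simp) (by simp only [Finset.mem_insert, Finset.mem_singleton]; omega))
    simp only [Finset.mem_insert, Finset.mem_singleton] at hi
    have e1245 := q1245.2
    have e1345 := q1345.2
    have e2345 := q2345.2
    clear * - hi ht l₁ l₂ l₃ l₄ l₅ e1245 e1345 e2345
    generalize f M {x₁, x₂, x₄, x₅} = g₁ at *
    generalize f M {x₁, x₃, x₄, x₅} = g₂ at *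
    generalize f M {x₂, x₃, x₄, x₅} = g₃ at *
    grind
  ·
    -- One fixed element on each side of the triangle `x₂, x₃, x₄`.
    obtain ⟨i, hi⟩ := hf M _ _ _ (hsub q1235) (hsub q1245) (hsub q1345)
      (hcard q1235) (hcard q1245) (hcard q1345)
      (hne x₃ (by simp) (by simp only [Finset.mem_insert, Finset.mem_singleton]; omega))
      (hne x₂ (by simp) (by simp only [Finset.mem_insert, Finset.mem_singleton]; omega))
      (hne x₂ (by simp) (by simp only [Finset.mem_insert, Finset.mem_singleton]; omega))
    simp only [Finset.mem_insert, Finset.mem_singleton] at hi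
    have e1235 := q1235.2
    have e1245 := q1245.2
    have e1345 := q1345.2
    clear * - hi ht l₁ l₂ l₃ l₄ l₅ e1235 e1245 e1345
    generalize f M {x₁, x₂, x₃, x₅} = g₁ at *
    generalize f M {x₁, x₂, x₄, x₅} = g₂ at *
    generalize f M {x₁, x₃, x₄, x₅} = g₃ at *
    grind
  ·
    -- Two fixed elements before the triangle `x₃, x₄, x₅`.
    obtain ⟨i, hi⟩ := hf M _ _ _ (hsub q1234) (hsub q1235) (hsub q1245)
      (hcard q1234) (hcard q1235) (hcard q1245)
      (hne x₄ (by simp) (by simp only [Finset.mem_insert, Finset.mem_singleton]; omega))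
      (hne x₃ (by simp) (by simp only [Finset.mem_insert, Finset.mem_singleton]; omega))
      (hne x₃ (by simp) (by simp only [Finset.mem_insert, Finset.mem_singleton]; omega))
    simp only [Finset.mem_insert, Finset.mem_singleton] at hi
    have e1234 := q1234.2
    have e1235 := q1235.2
    have e1245 := q1245.2
    clear * - hi ht l₁ l₂ l₃ l₄ l₅ e1234 e1235 e1245
    generalize f M {x₁, x₂, x₃, x₄} = g₁ at *
    generalize f M {x₁, x₂, x₃, x₅} = g₂ at *
    generalize f M {x₁, x₂, x₄, x₅} = g₃ at *
    grind
  ·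
    -- Every point lies in two of the supports, at positions of equal parity.
    obtain ⟨i, hi⟩ := hf M _ _ _ (hsub q1234) (hsub q1256) (hsub q3456)
      (hcard q1234) (hcard q1256) (hcard q3456)
      (hne x₃ (by simp) (by simp only [Finset.mem_insert, Finset.mem_singleton]; omega))
      (hne x₁ (by simp) (by simp only [Finset.mem_insert, Finset.mem_singleton]; omega))
      (hne x₁ (by simp) (by simp only [Finset.mem_insert, Finset.mem_singleton]; omega))
    simp only [Finset.mem_insert, Finset.mem_singleton] at hi
    have e1234 := q1234.2
    have e1256 := q1256.2
    have e3456 := q3456.2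
    clear * - hi ht l₁ l₂ l₃ l₄ l₅ e1234 e1256 e3456
    generalize f M {x₁, x₂, x₃, x₄} = g₁ at *
    generalize f M {x₁, x₂, x₅, x₆} = g₂ at *
    generalize f M {x₃, x₄, x₅, x₆} = g₃ at *
    grind

/-! ### Supports of codimension two -/

theorem exists_not_good_codim_two : ∃ M, ¬ Good (M + 2) M := by
  by_contra hcon
  push Not at hcon
  choose f hf using hcon
  set P : ℕ → ℕ → ℕ → Finset ℕ := fun M a b => Finset.range (M + 2) \ {a, b} with hP
  obtain ⟨⟨α, β, γ⟩, H⟩ := ramsey_three (fun a b c M =>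
    (f M (P M b c) a, f M (P M a c) b, f M (P M a b) c))
  simp only [Prod.mk.injEq] at H
  set Q : ℕ → ℕ → ℕ → ℕ → Prop := fun a b c M => (a < b ∧ b < c ∧ c < M) ∧
    f M (P M b c) a = α ∧ f M (P M a c) b = β ∧ f M (P M a b) c = γ with hQ
  -- Six generic points, together with all the triples that occur below.
  have H6 : ∀ᶠ x₁ in (hyperfilter ℕ : Filter ℕ), ∀ᶠ x₂ in (hyperfilter ℕ : Filter ℕ),
      ∀ᶠ x₃ in (hyperfilter ℕ : Filter ℕ), ∀ᶠ x₄ in (hyperfilter ℕ : Filter ℕ),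
      ∀ᶠ x₅ in (hyperfilter ℕ : Filter ℕ), ∀ᶠ x₆ in (hyperfilter ℕ : Filter ℕ),
      ∀ᶠ M in (hyperfilter ℕ : Filter ℕ),
      (Q x₁ x₂ x₃ M ∧ Q x₁ x₂ x₄ M ∧ Q x₁ x₃ x₄ M ∧ Q x₂ x₃ x₄ M) ∧
      (Q x₁ x₂ x₅ M ∧ Q x₁ x₂ x₆ M ∧ Q x₃ x₄ x₅ M ∧ Q x₃ x₄ x₆ M) ∧
      (Q x₁ x₅ x₆ M ∧ Q x₂ x₅ x₆ M ∧ Q x₃ x₅ x₆ M ∧ Q x₄ x₅ x₆ M) := by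
    simp only [eventually_and, eventually_const]
    exact ⟨⟨H, H, H, H⟩, ⟨H, H, H, H⟩, H, H, H, H⟩
  obtain ⟨x₁, H6⟩ := H6.exists
  obtain ⟨x₂, H6⟩ := H6.exists
  obtain ⟨x₃, H6⟩ := H6.exists
  obtain ⟨x₄, H6⟩ := H6.exists
  obtain ⟨x₅, H6⟩ := H6.exists
  obtain ⟨x₆, H6⟩ := H6.exists
  obtain ⟨M, ⟨q123, q124, q134, q234⟩, ⟨q125, q126, q345, q346⟩, q156, q256, q356, q456⟩ := H6.exists
  have hmem : ∀ a b i, i ∈ P M a b ↔ i < M + 2 ∧ ¬ (i = a ∨ i = b) := by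
    intro a b i
    simp [hP]
  have hsub : ∀ a b, P M a b ⊆ Finset.range (M + 2) := fun a b => Finset.sdiff_subset
  have hcard : ∀ {a b}, a < b → b < M → (P M a b).card = M := by
    intro a b hab hb
    rw [hP, Finset.card_sdiff_of_subset, Finset.card_pair hab.ne, Finset.card_range]
    · omega
    · intro x hx
      simp only [Finset.mem_insert, Finset.mem_singleton] at hx
      rw [Finset.mem_range]
      omega
  have hne : ∀ {a b c d} (x : ℕ), (x < M ∧ ¬ (x = a ∨ x = b)) → (x = c ∨ x = d) →
      P M a b ≠ P M c d := by
    intro a b c d x h h' he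
    have h1 := (hmem a b x).2 ⟨by omega, h.2⟩
    rw [he, hmem] at h1
    exact h1.2 h'
  have ht : α = β ∨ β = γ ∨ α = γ := by
    clear * -
    revert α β γ
    decide
  obtain ⟨l₁, l₂, -⟩ := q123.1
  obtain ⟨l₃, l₄, -⟩ := q345.1
  obtain ⟨-, l₅, l₆⟩ := q456.1
  rcases ht with ht | ht | ht
  ·
    -- The star centred at the last point `x₄`.
    obtain ⟨i, hi⟩ := hf M (P M x₁ x₄) (P M x₂ x₄) (P M x₃ x₄)
      (hsub _ _) (hsub _ _) (hsub _ _) (hcard (by omega) (by omega)) (hcard (by omega) (by omega))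
      (hcard (by omega) (by omega))
      (hne x₂ (by omega) (by simp))
      (hne x₃ (by omega) (by simp))
      (hne x₃ (by omega) (by simp))
    simp only [hmem] at hi
    have e124 := q124.2
    have e134 := q134.2
    have e234 := q234.2
    clear * - hi ht l₁ l₂ l₃ l₄ l₅ l₆ e124 e134 e234
    generalize f M (P M x₁ x₄) = g₁ at *
    generalize f M (P M x₂ x₄) = g₂ at *
    generalize f M (P M x₃ x₄) = g₃ at *
    grind
  ·
    -- The star centred at the first point `x₁`.
    obtain ⟨i, hi⟩ := hf M (P M x₁ x₂) (P M x₁ x₃) (P M x₁ x₄)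
      (hsub _ _) (hsub _ _) (hsub _ _) (hcard (by omega) (by omega)) (hcard (by omega) (by omega))
      (hcard (by omega) (by omega))
      (hne x₃ (by omega) (by simp))
      (hne x₄ (by omega) (by simp))
      (hne x₄ (by omega) (by simp))
    simp only [hmem] at hi
    have e123 := q123.2
    have e124 := q124.2
    have e134 := q134.2
    clear * - hi ht l₁ l₂ l₃ l₄ l₅ l₆ e123 e124 e134
    generalize f M (P M x₁ x₂) = g₁ at *
    generalize f M (P M x₁ x₃) = g₂ at *
    generalize f M (P M x₁ x₄) = g₃ at *
    grind
  ·
    -- A perfect matching by consecutive pairs.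
    obtain ⟨i, hi⟩ := hf M (P M x₁ x₂) (P M x₃ x₄) (P M x₅ x₆)
      (hsub _ _) (hsub _ _) (hsub _ _) (hcard (by omega) (by omega)) (hcard (by omega) (by omega))
      (hcard (by omega) (by omega))
      (hne x₃ (by omega) (by simp))
      (hne x₅ (by omega) (by simp))
      (hne x₅ (by omega) (by simp))
    simp only [hmem] at hi
    have e125 := q125.2
    have e126 := q126.2
    have e345 := q345.2
    have e346 := q346.2
    have e156 := q156.2
    have e256 := q256.2
    have e356 := q356.2
    have e456 := q456.2
    have e123 := q123.2
    have e124 := q124.2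
    have e134 := q134.2
    have e234 := q234.2
    clear * - hi ht l₁ l₂ l₃ l₄ l₅ l₆ e125 e126 e345 e346 e156 e256 e356 e456 e123 e124 e134 e234
    generalize f M (P M x₁ x₂) = g₁ at *
    generalize f M (P M x₃ x₄) = g₂ at *
    generalize f M (P M x₅ x₆) = g₃ at *
    grind

/-! ### Finiteness -/

/-- There exist only finitely many pairs `(m, w)` with `4 ≤ w ≤ m - 2` for which an
`I(m, w)` admissible set exists. -/
theorem finitely_many_admissible_ISets :
    {p : ℕ × ℕ | 4 ≤ p.2 ∧ p.2 ≤ p.1 - 2 ∧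
      ∃ A : Set (Fin p.1 → Fin 3), IsISet p.1 p.2 A ∧ IsAdmissible A}.Finite := by
  obtain ⟨M, hM⟩ := exists_not_good_four
  obtain ⟨W, hW⟩ := exists_not_good_codim_two
  refine ((Set.finite_Iio (M + W)).prod (Set.finite_Iio W)).subset ?_
  rintro ⟨m, w⟩ ⟨h4, h2, A, hI, hA⟩
  have hg : Good m w := good_of_admissible hI hA
  simp only at h4 h2
  have hw : w < W := by
    by_contra hw
    refine hW (Good.link_iter (w - W) ?_)
    rw [show W + (w - W) = w by omega]
    exact hg.mono (by omega)
  have hm : m < M + w := by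
    by_contra hm
    refine hM (Good.link_iter (w - 4) ?_)
    rw [show 4 + (w - 4) = w by omega]
    exact hg.mono (by omega)
  exact ⟨show m < M + W by omega, hw⟩
end

section
/- In [5] = {0,1,2,3,4}, the three 4-element subsets {0,1,3,4}, {0,2,3,4}, {1,2,3,4} form a type 11 clash: whenever v₁, v₂, v₃ are vectors in {0,1,2}^5 with supports {0,1,3,4}, {0,2,3,4}, {1,2,3,4} respectively, each of type 11, the triple v₁, v₂, v₃ forms a clash. -/
/-- If the support, listed in increasing order, starts with `a, b`, then type `11` says
`v a = v b = 1`. -/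
lemma eq_one_of_isOfType {m : ℕ} {v : Fin m → Fin 3} {S : Finset (Fin m)} {a b : Fin m}
    {l : List (Fin m)} (hS : Supp v = S) (hl : (a :: b :: l).toFinset = S)
    (hlt : (a :: b :: l).Pairwise (· < ·)) (ht : IsOfType v [1, 1]) : v a = 1 ∧ v b = 1 := by
  have hsort : S.sort (· ≤ ·) = a :: b :: l :=
    hl ▸ (List.toFinset_sort (· ≤ ·) (hlt.imp ne_of_lt)).2 (hlt.imp le_of_lt)
  rw [IsOfType, nonzeroValues, hS, hsort] at ht
  simpa [List.cons_prefix_cons, eq_comm] using ht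

lemma ne_zero_iff_of_supp_eq {m : ℕ} {v : Fin m → Fin 3} {S : Finset (Fin m)}
    (hS : Supp v = S) (i : Fin m) : v i ≠ 0 ↔ i ∈ S := by
  simp [← hS, Supp]

/-- A coordinate where all three values are nonzero never obstructs a clash. -/
lemma no_obstruction_of_ne_zero (a b c : Fin 3) (ha : a ≠ 0) (hb : b ≠ 0) (hc : c ≠ 0) :
    ¬ ExactlyOneNonzero a b c ∧ ¬ (a ≠ b ∧ a ≠ c ∧ b ≠ c) := by
  unfold ExactlyOneNonzero
  decide +revert

/-- `{0,1,3,4}, {0,2,3,4}, {1,2,3,4}` form a type `11` clash in `[5]`. -/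
theorem typedClash_11 :
    TypedClash ([1, 1] : List (Fin 3))
      ({0, 1, 3, 4} : Finset (Fin 5)) ({0, 2, 3, 4} : Finset (Fin 5))
      ({1, 2, 3, 4} : Finset (Fin 5)) := by
  intro v₁ v₂ v₃ h₁ h₂ h₃ t₁ t₂ t₃
  obtain ⟨a0, a1⟩ := eq_one_of_isOfType (a := 0) (b := 1) (l := [3, 4]) h₁ (by decide) (by decide) t₁
  obtain ⟨b0, b2⟩ := eq_one_of_isOfType (a := 0) (b := 2) (l := [3, 4]) h₂ (by decide) (by decide) t₂
  obtain ⟨c1, c2⟩ := eq_one_of_isOfType (a := 1) (b := 2) (l := [3, 4]) h₃ (by decide) (by decide) t₃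
  have n₁ := ne_zero_iff_of_supp_eq h₁
  have n₂ := ne_zero_iff_of_supp_eq h₂
  have n₃ := ne_zero_iff_of_supp_eq h₃
  have a2 : v₁ 2 = 0 := not_not.1 (mt (n₁ 2).1 (by decide))
  have b1 : v₂ 1 = 0 := not_not.1 (mt (n₂ 1).1 (by decide))
  have c0 : v₃ 0 = 0 := not_not.1 (mt (n₃ 0).1 (by decide))
  have key : ∀ i, ¬ ExactlyOneNonzero (v₁ i) (v₂ i) (v₃ i) ∧
      ¬ (v₁ i ≠ v₂ i ∧ v₁ i ≠ v₃ i ∧ v₂ i ≠ v₃ i) := by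
    intro i
    fin_cases i
    · simp [ExactlyOneNonzero, a0, b0, c0]
    · simp [ExactlyOneNonzero, a1, b1, c1]
    · simp [ExactlyOneNonzero, a2, b2, c2]
    · exact no_obstruction_of_ne_zero _ _ _
        ((n₁ 3).2 (by decide)) ((n₂ 3).2 (by decide)) ((n₃ 3).2 (by decide))
    · exact no_obstruction_of_ne_zero _ _ _
        ((n₁ 4).2 (by decide)) ((n₂ 4).2 (by decide)) ((n₃ 4).2 (by decide))
  exact ⟨fun ⟨i, hi⟩ => (key i).1 hi, fun ⟨i, hi⟩ => (key i).2 hi⟩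
end

section
/- In [5] = {0,1,2,3,4}, the three 4-element subsets {0,1,2,4}, {0,1,3,4}, {0,2,3,4} form a type 211 clash: whenever v₁, v₂, v₃ are vectors in {0,1,2}^5 with supports {0,1,2,4}, {0,1,3,4}, {0,2,3,4} respectively, each of type 211, the triple v₁, v₂, v₃ forms a clash. -/
/-- A vector of type `211` whose support is `a < b < c < d` takes the values `2, 1, 1` at
`a, b, c`. -/
theorem values_of_type_211 {m : ℕ} {v : Fin m → Fin 3} {a b c d : Fin m}
    (hab : a < b) (hbc : b < c) (hcd : c < d) (hs : Supp v = {a, b, c, d})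
    (ht : IsOfType v [2, 1, 1]) : v a = 2 ∧ v b = 1 ∧ v c = 1 := by
  have hsort : (Supp v).sort (· ≤ ·) = [a, b, c, d] := by
    have hac := hab.trans hbc
    have hbd := hbc.trans hcd
    have had := hab.trans hbd
    have hl : [a, b, c, d].toFinset = Supp v := by simp [hs]
    rw [← hl]
    refine (List.toFinset_sort (r := (· ≤ ·)) ?_).2 ?_
    · simp [hab.ne, hac.ne, had.ne, hbc.ne, hbd.ne, hcd.ne]
    · simp [hab.le, hac.le, had.le, hbc.le, hbd.le, hcd.le]
  rw [IsOfType, nonzeroValues, hsort] at ht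
  simpa [List.cons_prefix_cons, eq_comm] using ht

/-- `{0,1,2,4}, {0,1,3,4}, {0,2,3,4}` form a type `211` clash in `[5]`. -/
theorem typedClash_211 :
    TypedClash ([2, 1, 1] : List (Fin 3))
      ({0, 1, 2, 4} : Finset (Fin 5)) ({0, 1, 3, 4} : Finset (Fin 5))
      ({0, 2, 3, 4} : Finset (Fin 5)) := by
  intro v₁ v₂ v₃ h₁ h₂ h₃ t₁ t₂ t₃
  obtain ⟨a0, a1, a2⟩ := values_of_type_211 (by decide) (by decide) (by decide) h₁ t₁
  obtain ⟨b0, b1, b3⟩ := values_of_type_211 (by decide) (by decide) (by decide) h₂ t₂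
  obtain ⟨c0, c2, c3⟩ := values_of_type_211 (by decide) (by decide) (by decide) h₃ t₃
  have hmem (v : Fin 5 → Fin 3) (i : Fin 5) : i ∈ Supp v ↔ v i ≠ 0 := by simp [Supp]
  have a3 : v₁ 3 = 0 := not_not.1 fun h => absurd ((hmem v₁ 3).2 h) (by rw [h₁]; decide)
  have b2 : v₂ 2 = 0 := not_not.1 fun h => absurd ((hmem v₂ 2).2 h) (by rw [h₂]; decide)
  have c1 : v₃ 1 = 0 := not_not.1 fun h => absurd ((hmem v₃ 1).2 h) (by rw [h₃]; decide)
  have a4 : v₁ 4 ≠ 0 := (hmem v₁ 4).1 (by rw [h₁]; decide)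
  have b4 : v₂ 4 ≠ 0 := (hmem v₂ 4).1 (by rw [h₂]; decide)
  have c4 : v₃ 4 ≠ 0 := (hmem v₃ 4).1 (by rw [h₃]; decide)
  constructor
  · rintro ⟨i, hi⟩
    fin_cases i <;> simp_all [ExactlyOneNonzero]
  · rintro ⟨i, hi⟩
    fin_cases i
    · simp_all
    · simp_all
    · simp_all
    · simp_all
    · have pigeonhole : ∀ x y z : Fin 3, x ≠ 0 → y ≠ 0 → z ≠ 0 →
          ¬ (x ≠ y ∧ x ≠ z ∧ y ≠ z) := by decide
      exact pigeonhole _ _ _ a4 b4 c4 hi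
end

section
/- There exists a natural number N₀ such that for every N ≥ N₀, no I(N, 4) admissible set exists. (In the paper, N₀ may be taken to be the hypergraph Ramsey number R⁽⁴⁾(5,5,5,5,5,5,6,6).) -/
/-- The negation of `Clash3`, for vectors indexed by `ℕ`. -/
def NoClash (u v w : ℕ → Fin 3) : Prop :=
  ∃ i, ExactlyOneNonzero (u i) (v i) (w i) ∨ (u i ≠ v i ∧ u i ≠ w i ∧ v i ≠ w i)

/-- A family `F` of vectors indexed by finite subsets of `ℕ` is good below `n` if, on `4`-subsets
`S` of `{0, …, n - 1}`, `F S` has support `S`, and no three of these vectors clash. -/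
def GoodBelow (n : ℕ) (F : Finset ℕ → ℕ → Fin 3) : Prop :=
  (∀ S ⊆ Finset.range n, S.card = 4 → ∀ i, F S i ≠ 0 ↔ i ∈ S) ∧
  ∀ S ⊆ Finset.range n, ∀ T ⊆ Finset.range n, ∀ R ⊆ Finset.range n,
    S.card = 4 → T.card = 4 → R.card = 4 → S ≠ T → S ≠ R → T ≠ R → NoClash (F S) (F T) (F R)

/-- Extend the vectors of an admissible `I(N,4)` set by zero to all of `ℕ`. -/
lemma exists_goodBelow {n N : ℕ} (hN : n ≤ N) {A : Set (Fin N → Fin 3)} (hI : IsISet N 4 A)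
    (hA : IsAdmissible A) : ∃ F, GoodBelow n F := by
  have key : ∀ S : Finset ℕ, ∃ v : Fin N → Fin 3, S ⊆ Finset.range n → S.card = 4 →
      v ∈ A ∧ ∀ i, v i ≠ 0 ↔ (i : ℕ) ∈ S := by
    intro S
    by_cases h : S ⊆ Finset.range n ∧ S.card = 4
    · have hlt : ∀ i ∈ S, i < N := fun i hi => (Finset.mem_range.1 (h.1 hi)).trans_le hN
      obtain ⟨v, ⟨hv, hs⟩, -⟩ := hI.1 (S.attachFin hlt) (by simpa using h.2)
      refine ⟨v, fun _ _ => ⟨hv, fun i => ?_⟩⟩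
      have := Finset.ext_iff.1 hs i
      simpa [Supp] using this
    · exact ⟨0, fun h1 h2 => (h ⟨h1, h2⟩).elim⟩
  choose v hv using key
  refine ⟨fun S i => if h : i < N then v S ⟨i, h⟩ else 0, ?_, ?_⟩
  · intro S hS hc i
    by_cases hi : i < N
    · simpa [hi] using (hv S hS hc).2 ⟨i, hi⟩
    · have : i ∉ S := fun h => hi ((Finset.mem_range.1 (hS h)).trans_le hN)
      simp [hi, this]
  · intro S hS T hT R hR cS cT cR h1 h2 h3
    have hne : ∀ S ⊆ Finset.range n, ∀ T ⊆ Finset.range n, S.card = 4 → T.card = 4 → S ≠ T →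
        v S ≠ v T := by
      intro S hS T hT cS cT h e
      apply h
      ext i
      by_cases hi : i < N
      · rw [← (hv S hS cS).2 ⟨i, hi⟩, ← (hv T hT cT).2 ⟨i, hi⟩, e]
      · exact ⟨fun h => (hi ((Finset.mem_range.1 (hS h)).trans_le hN)).elim,
          fun h => (hi ((Finset.mem_range.1 (hT h)).trans_le hN)).elim⟩
    have := hA.2 _ (hv S hS cS).1 _ (hv T hT cT).1 _ (hv R hR cR).1
      (hne S hS T hT cS cT h1) (hne S hS R hR cS cR h2) (hne T hT R hR cT cR h3)
    rw [Clash3, not_and_or, not_not, not_not] at this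
    rcases this with ⟨i, hi⟩ | ⟨i, hi⟩
    · exact ⟨i, Or.inl (by simpa using hi)⟩
    · exact ⟨i, Or.inr (by simpa using hi)⟩

/-- The type of `F {x, y, z, w}` when `x < y < z < w`. -/
def colour (F : Finset ℕ → ℕ → Fin 3) (x y z w : ℕ) : Fin 3 × Fin 3 × Fin 3 × Fin 3 :=
  (F {x, y, z, w} x, F {x, y, z, w} y, F {x, y, z, w} z, F {x, y, z, w} w)

lemma exists_limit {κ : Type*} [Finite κ] (U : Ultrafilter ℕ) (g : ℕ → κ) :
    ∃ t, ∀ᶠ n in (U : Filter ℕ), g n = t := by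
  have h : ∀ᶠ n in (U : Filter ℕ), ∃ t ∈ (Set.univ : Set κ), g n = t :=
    Filter.Eventually.of_forall fun n => ⟨g n, trivial, rfl⟩
  obtain ⟨t, -, ht⟩ := (Ultrafilter.eventually_exists_mem_iff Set.finite_univ).1 h
  exact ⟨t, ht⟩

/-- Ramsey's theorem for `4`-subsets together with compactness, by iterated ultrafilter limits. Only
the seven `4`-subsets needed for a clash are recorded. -/
lemma exists_homogeneous {κ : Type*} [Finite κ] (g : ℕ → ℕ → ℕ → ℕ → ℕ → κ) :
    ∃ t n x₁ x₂ x₃ x₄ x₅ x₆, x₁ < x₂ ∧ x₂ < x₃ ∧ x₃ < x₄ ∧ x₄ < x₅ ∧ x₅ < x₆ ∧ x₆ < n ∧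
      g n x₁ x₂ x₃ x₄ = t ∧ g n x₁ x₂ x₃ x₅ = t ∧ g n x₁ x₂ x₄ x₅ = t ∧ g n x₁ x₃ x₄ x₅ = t ∧
      g n x₂ x₃ x₄ x₅ = t ∧ g n x₁ x₂ x₅ x₆ = t ∧ g n x₃ x₄ x₅ x₆ = t := by
  let U : Ultrafilter ℕ := Filter.hyperfilter ℕ
  have gt : ∀ k : ℕ, ∀ᶠ x in (U : Filter ℕ), k < x := fun k =>
    Filter.Eventually.filter_mono (Nat.hyperfilter_le_atTop) (Filter.eventually_gt_atTop k)
  choose c₄ h₄ using fun x y z w => exists_limit U fun n => g n x y z w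
  choose c₃ h₃ using fun x y z => exists_limit U (c₄ x y z)
  choose c₂ h₂ using fun x y => exists_limit U (c₃ x y)
  choose c₁ h₁ using fun x => exists_limit U (c₂ x)
  obtain ⟨t, h₀⟩ := exists_limit U c₁
  obtain ⟨x₁, a₁⟩ := h₀.exists
  obtain ⟨x₂, l₂, a₂, a₁₂⟩ := ((gt x₁).and (h₀.and (h₁ x₁))).exists
  obtain ⟨x₃, l₃, a₃, a₁₃, a₂₃, a₁₂₃⟩ :=
    ((gt x₂).and (h₀.and ((h₁ x₁).and ((h₁ x₂).and (h₂ x₁ x₂))))).exists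
  obtain ⟨x₄, l₄, a₃₄, a₁₂₄, a₁₃₄, a₂₃₄, a₁₂₃₄⟩ := ((gt x₃).and ((h₁ x₃).and
    ((h₂ x₁ x₂).and ((h₂ x₁ x₃).and ((h₂ x₂ x₃).and (h₃ x₁ x₂ x₃)))))).exists
  obtain ⟨x₅, l₅, a₁₂₅, a₃₄₅, a₁₂₃₅, a₁₂₄₅, a₁₃₄₅, a₂₃₄₅⟩ := ((gt x₄).and ((h₂ x₁ x₂).and
    ((h₂ x₃ x₄).and ((h₃ x₁ x₂ x₃).and ((h₃ x₁ x₂ x₄).and ((h₃ x₁ x₃ x₄).and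
    (h₃ x₂ x₃ x₄))))))).exists
  obtain ⟨x₆, l₆, a₁₂₅₆, a₃₄₅₆⟩ := ((gt x₅).and ((h₃ x₁ x₂ x₅).and (h₃ x₃ x₄ x₅))).exists
  obtain ⟨n, ln, b₁, b₂, b₃, b₄, b₅, b₆, b₇⟩ := ((gt x₆).and ((h₄ x₁ x₂ x₃ x₄).and
    ((h₄ x₁ x₂ x₃ x₅).and ((h₄ x₁ x₂ x₄ x₅).and ((h₄ x₁ x₃ x₄ x₅).and ((h₄ x₂ x₃ x₄ x₅).and
    ((h₄ x₁ x₂ x₅ x₆).and (h₄ x₃ x₄ x₅ x₆)))))))).exists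
  refine ⟨t, n, x₁, x₂, x₃, x₄, x₅, x₆, l₂, l₃, l₄, l₅, l₆, ln, ?_, ?_, ?_, ?_, ?_, ?_, ?_⟩ <;>
    simp only [*]

lemma card_four {x y z w : ℕ} (hxy : x < y) (hyz : y < z) (hzw : z < w) :
    ({x, y, z, w} : Finset ℕ).card = 4 := by
  rw [Finset.card_insert_of_notMem, Finset.card_insert_of_notMem, Finset.card_pair] <;>
    simp <;> omega

lemma subset_range {n x y z w : ℕ} (hxy : x < y) (hyz : y < z) (hzw : z < w) (hw : w < n) :
    ({x, y, z, w} : Finset ℕ) ⊆ Finset.range n := by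
  intro i hi
  simp only [Finset.mem_insert, Finset.mem_singleton] at hi
  rw [Finset.mem_range]
  omega

/-- The vector with value `a, b, c, d` at `x, y, z, w` and `0` elsewhere. -/
def vec (x y z w : ℕ) (t : Fin 3 × Fin 3 × Fin 3 × Fin 3) (i : ℕ) : Fin 3 :=
  if i = x then t.1 else if i = y then t.2.1 else if i = z then t.2.2.1
    else if i = w then t.2.2.2 else 0

lemma eq_vec {n : ℕ} {F : Finset ℕ → ℕ → Fin 3} (hF : GoodBelow n F) {x y z w : ℕ}
    {t : Fin 3 × Fin 3 × Fin 3 × Fin 3} (hxy : x < y) (hyz : y < z) (hzw : z < w) (hw : w < n)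
    (h : colour F x y z w = t) : F {x, y, z, w} = vec x y z w t := by
  have hs := subset_range hxy hyz hzw hw
  have hc := card_four hxy hyz hzw
  subst h
  funext i
  have := hF.1 _ hs hc i
  unfold vec colour
  split_ifs with h1 h2 h3 h4
  · rw [h1]
  · rw [h2]
  · rw [h3]
  · rw [h4]
  · simpa [h1, h2, h3, h4] using this

/-- No nonzero type avoids all four clashes available among six points. -/
lemma mono_clash {x₁ x₂ x₃ x₄ x₅ x₆ : ℕ} (l₁ : x₁ < x₂) (l₂ : x₂ < x₃) (l₃ : x₃ < x₄)
    (l₄ : x₄ < x₅) (l₅ : x₅ < x₆) {a b c d : Fin 3} (ha : a ≠ 0) (hb : b ≠ 0) (hc : c ≠ 0)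
    (hd : d ≠ 0)
    (h₁ : NoClash (vec x₂ x₃ x₄ x₅ (a, b, c, d)) (vec x₁ x₃ x₄ x₅ (a, b, c, d))
      (vec x₁ x₂ x₄ x₅ (a, b, c, d)))
    (h₂ : NoClash (vec x₁ x₃ x₄ x₅ (a, b, c, d)) (vec x₁ x₂ x₄ x₅ (a, b, c, d))
      (vec x₁ x₂ x₃ x₅ (a, b, c, d)))
    (h₃ : NoClash (vec x₁ x₂ x₄ x₅ (a, b, c, d)) (vec x₁ x₂ x₃ x₅ (a, b, c, d))
      (vec x₁ x₂ x₃ x₄ (a, b, c, d)))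
    (h₄ : NoClash (vec x₁ x₂ x₃ x₄ (a, b, c, d)) (vec x₁ x₂ x₅ x₆ (a, b, c, d))
      (vec x₃ x₄ x₅ x₆ (a, b, c, d))) : False := by
  -- If two neighbouring entries agree, the three sets omit consecutive points of `x₁, …, x₅`.
  have e₁ : a ≠ b := by
    rintro rfl
    obtain ⟨i, hi⟩ := h₁
    clear h₂ h₃ h₄
    unfold vec ExactlyOneNonzero at hi
    grind
  have e₂ : b ≠ c := by
    rintro rfl
    obtain ⟨i, hi⟩ := h₂
    clear h₁ h₃ h₄
    unfold vec ExactlyOneNonzero at hi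
    grind
  have e₃ : c ≠ d := by
    rintro rfl
    obtain ⟨i, hi⟩ := h₃
    clear h₁ h₂ h₄
    unfold vec ExactlyOneNonzero at hi
    grind
  -- Only the values `1` and `2` are available, so the type alternates.
  obtain rfl : a = c := by omega
  obtain rfl : b = d := by omega
  obtain ⟨i, hi⟩ := h₄
  clear h₁ h₂ h₃
  unfold vec ExactlyOneNonzero at hi
  grind

/-- There exists `N₀` such that for every `N ≥ N₀`, no `I(N, 4)` admissible set exists. -/
theorem no_IN4_for_large_N :
    ∃ N₀ : ℕ, ∀ N ≥ N₀,
      ¬ ∃ A : Set (Fin N → Fin 3), IsISet N 4 A ∧ IsAdmissible A := by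
  by_contra! hcon
  have hex : ∀ n, ∃ F, GoodBelow n F := fun n => by
    obtain ⟨N, hN, A, hI, hA⟩ := hcon n
    exact exists_goodBelow hN hI hA
  choose F hF using hex
  obtain ⟨⟨a, b, c, d⟩, n, x₁, x₂, x₃, x₄, x₅, x₆, l₁, l₂, l₃, l₄, l₅, l₆,
    g₁₂₃₄, g₁₂₃₅, g₁₂₄₅, g₁₃₄₅, g₂₃₄₅, g₁₂₅₆, g₃₄₅₆⟩ :=
    exists_homogeneous fun n => colour (F n)
  have nz := (hF n).1 {x₁, x₂, x₃, x₄} (subset_range l₁ l₂ l₃ (by omega)) (card_four l₁ l₂ l₃)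
  have g := g₁₂₃₄
  simp only [colour, Prod.mk.injEq] at g
  obtain ⟨ga, gb, gc, gd⟩ := g
  have e₁₂₃₄ := eq_vec (hF n) l₁ l₂ l₃ (by omega) g₁₂₃₄
  have e₁₂₃₅ := eq_vec (hF n) l₁ l₂ (by omega) (by omega) g₁₂₃₅
  have e₁₂₄₅ := eq_vec (hF n) l₁ (by omega) l₄ (by omega) g₁₂₄₅
  have e₁₃₄₅ := eq_vec (hF n) (by omega) l₃ l₄ (by omega) g₁₃₄₅
  have e₂₃₄₅ := eq_vec (hF n) l₂ l₃ l₄ (by omega) g₂₃₄₅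
  have e₁₂₅₆ := eq_vec (hF n) l₁ (by omega) l₅ (by omega) g₁₂₅₆
  have e₃₄₅₆ := eq_vec (hF n) l₃ l₄ l₅ (by omega) g₃₄₅₆
  -- The sets are told apart below by exhibiting a point of one outside the other.
  have ne : ∀ {S T : Finset ℕ} (i : ℕ), i ∈ S → i ∉ T → S ≠ T :=
    fun i h h' e => h' (e ▸ h)
  refine mono_clash l₁ l₂ l₃ l₄ l₅ (a := a) (b := b) (c := c) (d := d) ?_ ?_ ?_ ?_ ?_ ?_ ?_ ?_
  · rw [← ga, nz]; simp
  · rw [← gb, nz]; simp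
  · rw [← gc, nz]; simp
  · rw [← gd, nz]; simp
  · rw [← e₂₃₄₅, ← e₁₃₄₅, ← e₁₂₄₅]
    refine (hF n).2 _ ?_ _ ?_ _ ?_ ?_ ?_ ?_ (ne x₂ ?_ ?_) (ne x₃ ?_ ?_) (ne x₃ ?_ ?_)
    all_goals first
      | (apply subset_range <;> omega) | (apply card_four <;> omega) | (simp; done) | (simp; omega)
  · rw [← e₁₃₄₅, ← e₁₂₄₅, ← e₁₂₃₅]
    refine (hF n).2 _ ?_ _ ?_ _ ?_ ?_ ?_ ?_ (ne x₃ ?_ ?_) (ne x₄ ?_ ?_) (ne x₄ ?_ ?_)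
    all_goals first
      | (apply subset_range <;> omega) | (apply card_four <;> omega) | (simp; done) | (simp; omega)
  · rw [← e₁₂₄₅, ← e₁₂₃₅, ← e₁₂₃₄]
    refine (hF n).2 _ ?_ _ ?_ _ ?_ ?_ ?_ ?_ (ne x₄ ?_ ?_) (ne x₅ ?_ ?_) (ne x₅ ?_ ?_)
    all_goals first
      | (apply subset_range <;> omega) | (apply card_four <;> omega) | (simp; done) | (simp; omega)
  · rw [← e₁₂₃₄, ← e₁₂₅₆, ← e₃₄₅₆]
    refine (hF n).2 _ ?_ _ ?_ _ ?_ ?_ ?_ ?_ (ne x₃ ?_ ?_) (ne x₁ ?_ ?_) (ne x₁ ?_ ?_)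
    all_goals first
      | (apply subset_range <;> omega) | (apply card_four <;> omega) | (simp; done) | (simp; omega)
end

section
/- Let A be an I(m, m−2) admissible set and for each pair i < j in [m] let v(i,j) denote the unique element of A whose i-th and j-th coordinates are both 0. Suppose (a,b,c) ∈ {1,2}³ with (a,b,c) ∉ {(1,2,1),(2,1,2)} is such that for all i < j < k in [m], (v(i,j)_k, v(i,k)_j, v(j,k)_i) = (a,b,c). Then m ≤ 3. -/
/-- Three vectors clash if at each coordinate at least two of them take a common value `d` and the
third takes the value `d` or `0`, or if all three vanish there. -/
lemma clash3_of_pattern {m : ℕ} {p q r : Fin m → Fin 3}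
    (h : ∀ x, ∃ d, (p x = d ∧ q x = d ∧ r x = d) ∨ (p x = 0 ∧ q x = d ∧ r x = d) ∨
      (p x = d ∧ q x = 0 ∧ r x = d) ∨ (p x = d ∧ q x = d ∧ r x = 0)) :
    Clash3 p q r := by
  refine ⟨?_, ?_⟩ <;> rintro ⟨x, hx⟩ <;> obtain ⟨d, hd⟩ := h x
  · unfold ExactlyOneNonzero at hx
    grind
  · grind

/-- If `A` is an `I(m, m-2)` admissible set, `v i j` (for `i < j`) is the unique element of
`A` whose `i`-th and `j`-th coordinates are both `0`, and there is `(a,b,c) ∈ {1,2}³` other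
than `(1,2,1)` and `(2,1,2)` such that `(v(i,j)_k, v(i,k)_j, v(j,k)_i) = (a,b,c)` for all
`i < j < k`, then `m ≤ 3`. -/
theorem monochromatic_non121_le_three {m : ℕ} (A : Set (Fin m → Fin 3))
    (hI : IsISet m (m - 2) A) (hAdm : IsAdmissible A)
    (v : Fin m → Fin m → (Fin m → Fin 3))
    (hv : ∀ i j : Fin m, i < j → v i j ∈ A ∧ v i j i = 0 ∧ v i j j = 0)
    (a b c : Fin 3)
    (ha : a = 1 ∨ a = 2) (hb : b = 1 ∨ b = 2) (hc : c = 1 ∨ c = 2)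
    (habc : (a, b, c) ≠ (1, 2, 1) ∧ (a, b, c) ≠ (2, 1, 2))
    (hcol : ∀ i j k : Fin m, i < j → j < k →
      v i j k = a ∧ v i k j = b ∧ v j k i = c) :
    m ≤ 3 := by
  by_contra! hm
  have ha0 : a ≠ 0 := by rcases ha with rfl | rfl <;> decide
  have hb0 : b ≠ 0 := by rcases hb with rfl | rfl <;> decide
  have hc0 : c ≠ 0 := by rcases hc with rfl | rfl <;> decide
  obtain ⟨e0, h0⟩ : ∃ e : Fin m, e.val = 0 := ⟨⟨0, by omega⟩, rfl⟩
  obtain ⟨e1, h1⟩ : ∃ e : Fin m, e.val = 1 := ⟨⟨1, by omega⟩, rfl⟩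
  obtain ⟨e2, h2⟩ : ∃ e : Fin m, e.val = 2 := ⟨⟨2, by omega⟩, rfl⟩
  obtain ⟨e3, h3⟩ : ∃ e : Fin m, e.val = 3 := ⟨⟨3, by omega⟩, rfl⟩
  have l01 : e0 < e1 := by omega
  have l02 : e0 < e2 := by omega
  have l03 : e0 < e3 := by omega
  have l12 : e1 < e2 := by omega
  have l13 : e1 < e3 := by omega
  have l23 : e2 < e3 := by omega
  have cover (x : Fin m) : x = e0 ∨ x = e1 ∨ x = e2 ∨ x = e3 ∨ e3 < x := by omega
  obtain ⟨m01, z01, z01'⟩ := hv e0 e1 l01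
  obtain ⟨m02, z02, z02'⟩ := hv e0 e2 l02
  obtain ⟨m03, z03, z03'⟩ := hv e0 e3 l03
  obtain ⟨m13, z13, z13'⟩ := hv e1 e3 l13
  obtain ⟨m23, z23, z23'⟩ := hv e2 e3 l23
  obtain ⟨p012, q012, r012⟩ := hcol e0 e1 e2 l01 l12
  obtain ⟨p013, q013, r013⟩ := hcol e0 e1 e3 l01 l13
  obtain ⟨p023, q023, r023⟩ := hcol e0 e2 e3 l02 l23
  obtain ⟨p123, q123, r123⟩ := hcol e1 e2 e3 l12 l23
  have hcase : a = b ∨ b = c := by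
    rcases ha with rfl | rfl <;> rcases hb with rfl | rfl <;> rcases hc with rfl | rfl <;>
      simp at habc ⊢
  rcases hcase with rfl | rfl
  · refine hAdm.2 _ m01 _ m02 _ m03 (fun h => ?_) (fun h => ?_) (fun h => ?_)
      (clash3_of_pattern fun x => ?_)
    · exact ha0 (by rw [← p012, h, z02'])
    · exact ha0 (by rw [← p013, h, z03'])
    · exact ha0 (by rw [← p023, h, z03'])
    · rcases cover x with rfl | rfl | rfl | rfl | hx
      · exact ⟨0, by simp [*]⟩
      · exact ⟨a, by simp [*]⟩
      · exact ⟨a, by simp [*]⟩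
      · exact ⟨a, by simp [*]⟩
      · have s1 := (hcol e0 e1 x l01 (l13.trans hx)).1
        have s2 := (hcol e0 e2 x l02 (l23.trans hx)).1
        have s3 := (hcol e0 e3 x l03 hx).1
        exact ⟨a, by simp [*]⟩
  · refine hAdm.2 _ m03 _ m13 _ m23 (fun h => ?_) (fun h => ?_) (fun h => ?_)
      (clash3_of_pattern fun x => ?_)
    · exact hc0 (by rw [← r013, ← h, z03])
    · exact hc0 (by rw [← r023, ← h, z03])
    · exact hc0 (by rw [← r123, ← h, z13])
    · rcases cover x with rfl | rfl | rfl | rfl | hx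
      · exact ⟨b, by simp [*]⟩
      · exact ⟨b, by simp [*]⟩
      · exact ⟨b, by simp [*]⟩
      · exact ⟨0, by simp [*]⟩
      · have s1 := (hcol e0 e3 x l03 hx).1
        have s2 := (hcol e1 e3 x l13 hx).1
        have s3 := (hcol e2 e3 x l23 hx).1
        exact ⟨a, by simp [*]⟩
end

section
/- Let A be an I(m, m−2) admissible set and for each pair i < j in [m] let v(i,j) denote the unique element of A whose i-th and j-th coordinates are both 0. Suppose (a,b,c) ∈ {(1,2,1),(2,1,2)} is such that for all i < j < k in [m], (v(i,j)_k, v(i,k)_j, v(j,k)_i) = (a,b,c). Then m ≤ 5. -/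
/-- If `A` is an `I(m, m-2)` admissible set, `v i j` (for `i < j`) is the unique element of
`A` whose `i`-th and `j`-th coordinates are both `0`, and `(a,b,c)` is `(1,2,1)` or `(2,1,2)`
with `(v(i,j)_k, v(i,k)_j, v(j,k)_i) = (a,b,c)` for all `i < j < k`, then `m ≤ 5`. -/
theorem monochromatic_121_le_five {m : ℕ} (A : Set (Fin m → Fin 3))
    (hI : IsISet m (m - 2) A) (hAdm : IsAdmissible A)
    (v : Fin m → Fin m → (Fin m → Fin 3))
    (hv : ∀ i j : Fin m, i < j → v i j ∈ A ∧ v i j i = 0 ∧ v i j j = 0)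
    (a b c : Fin 3)
    (habc : (a, b, c) = ((1 : Fin 3), (2 : Fin 3), (1 : Fin 3)) ∨
            (a, b, c) = ((2 : Fin 3), (1 : Fin 3), (2 : Fin 3)))
    (hcol : ∀ i j k : Fin m, i < j → j < k →
      v i j k = a ∧ v i k j = b ∧ v j k i = c) :
    m ≤ 5 := by
  by_contra hm
  have hca : c = a := by
    rcases habc with h | h <;> simp only [Prod.mk.injEq] at h <;> rw [h.1, h.2.2]
  have ha : a ≠ 0 := by
    rcases habc with h | h <;> simp only [Prod.mk.injEq] at h <;> rw [h.1] <;> decide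
  -- Between neighbouring coordinates there is no room for the value `b`.
  have key : ∀ i j k : Fin m, j.val = i.val + 1 →
      v i j k = if k.val = i.val ∨ k.val = i.val + 1 then 0 else a := by
    intro i j k hij
    have hlt : i < j := Fin.lt_def.2 (by omega)
    split_ifs with h
    · rcases h with h | h
      · rw [show k = i from Fin.ext h]; exact (hv i j hlt).2.1
      · rw [show k = j from Fin.ext (h.trans hij.symm)]; exact (hv i j hlt).2.2
    · rcases Nat.lt_or_ge k.val i.val with h' | h'
      · exact ((hcol k i j (Fin.lt_def.2 h') hlt).2.2).trans hca
      · exact (hcol i j k hlt (Fin.lt_def.2 (by omega))).1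
  have k1 := fun k => key ⟨0, by omega⟩ ⟨1, by omega⟩ k rfl
  have k2 := fun k => key ⟨2, by omega⟩ ⟨3, by omega⟩ k rfl
  have k3 := fun k => key ⟨4, by omega⟩ ⟨5, by omega⟩ k rfl
  refine hAdm.2 _ (hv ⟨0, by omega⟩ ⟨1, by omega⟩ (by simp)).1
    _ (hv ⟨2, by omega⟩ ⟨3, by omega⟩ (by simp)).1
    _ (hv ⟨4, by omega⟩ ⟨5, by omega⟩ (by simp)).1 ?_ ?_ ?_ ⟨?_, ?_⟩
  · intro h
    have := congrFun h ⟨0, by omega⟩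
    rw [k1, k2] at this
    exact ha (by simpa using this.symm)
  · intro h
    have := congrFun h ⟨0, by omega⟩
    rw [k1, k3] at this
    exact ha (by simpa using this.symm)
  · intro h
    have := congrFun h ⟨2, by omega⟩
    rw [k2, k3] at this
    exact ha (by simpa using this.symm)
  · rintro ⟨i, hi⟩
    rw [k1, k2, k3] at hi
    unfold ExactlyOneNonzero at hi
    dsimp only at hi
    split_ifs at hi <;> omega
  · rintro ⟨i, h12, h13, h23⟩
    rw [k1, k2] at h12
    rw [k1, k3] at h13
    rw [k2, k3] at h23
    split_ifs at h12 h13 h23 <;> simp_all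
end

section
/- Let S be an I(n, w) admissible set with 0 < w < n. Then the set S₁ = {(v₁,…,v_{n−1}) : (v₁,…,v_n) ∈ S, v_n = 0} of restrictions to the first n−1 coordinates of those elements of S whose last coordinate is 0 is an I(n−1, w) admissible set. -/
theorem supp_snoc_zero {n : ℕ} (u : Fin n → Fin 3) :
    Supp (Fin.snoc u 0 : Fin (n + 1) → Fin 3) = (Supp u).map Fin.castSuccEmb := by
  ext i
  refine Fin.lastCases ?_ (fun j => ?_) i
  · simp [Supp, Fin.castSucc_ne_last]
  · simp [Supp]

theorem Clash2.snoc_zero {n : ℕ} {u₁ u₂ : Fin n → Fin 3} (h : Clash2 u₁ u₂) :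
    Clash2 (Fin.snoc u₁ 0 : Fin (n + 1) → Fin 3) (Fin.snoc u₂ 0) := by
  simpa only [Clash2, supp_snoc_zero, Finset.map_subset_map] using h

theorem Clash3.snoc_zero {n : ℕ} {u₁ u₂ u₃ : Fin n → Fin 3} (h : Clash3 u₁ u₂ u₃) :
    Clash3 (Fin.snoc u₁ 0 : Fin (n + 1) → Fin 3) (Fin.snoc u₂ 0) (Fin.snoc u₃ 0) := by
  simpa [Clash3, ExactlyOneNonzero, Fin.exists_fin_succ', Fin.snoc_castSucc, Fin.snoc_last]
    using h

/-- The restricted set consists of the vectors `u` such that `u` followed by `0` lies in `S`. -/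
theorem mem_restrict_iff {n : ℕ} (S : Set (Fin (n + 1) → Fin 3)) (u : Fin n → Fin 3) :
    (∃ v ∈ S, v (Fin.last n) = 0 ∧ u = fun i => v i.castSucc) ↔
      (Fin.snoc u 0 : Fin (n + 1) → Fin 3) ∈ S := by
  constructor
  · rintro ⟨v, hv, h0, rfl⟩
    have hsnoc : (Fin.snoc (fun i : Fin n => v i.castSucc) 0 : Fin (n + 1) → Fin 3) = v := by
      rw [← h0]
      exact Fin.snoc_init_self v
    rwa [hsnoc]
  · intro h
    exact ⟨_, h, by simp, by simp⟩

/-- If `S` is an `I(n+1, w)` admissible set with `0 < w < n+1`, then the set of restrictions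
to the first `n` coordinates of those elements of `S` whose last coordinate is `0` is an
`I(n, w)` admissible set. -/
theorem restrict_zero_coordinate {n w : ℕ} (hw : 0 < w) (hwn : w < n + 1)
    (S : Set (Fin (n + 1) → Fin 3)) (hI : IsISet (n + 1) w S) (hAdm : IsAdmissible S) :
    IsISet n w {u : Fin n → Fin 3 |
        ∃ v ∈ S, v (Fin.last n) = 0 ∧ u = fun i => v i.castSucc} ∧
    IsAdmissible {u : Fin n → Fin 3 |
        ∃ v ∈ S, v (Fin.last n) = 0 ∧ u = fun i => v i.castSucc} := by
  have hinj : ∀ u u' : Fin n → Fin 3,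
      u ≠ u' → (Fin.snoc u 0 : Fin (n + 1) → Fin 3) ≠ Fin.snoc u' 0 :=
    fun u u' hne h => hne (Fin.snoc_inj.1 h).1
  simp only [mem_restrict_iff]
  refine ⟨⟨fun T hT => ?_, fun u hu => ?_⟩, fun u₁ h₁ u₂ h₂ h12 hc => ?_,
    fun u₁ h₁ u₂ h₂ u₃ h₃ h12 h13 h23 hc => ?_⟩
  · obtain ⟨v, ⟨hv, hs⟩, huniq⟩ := hI.1 (T.map Fin.castSuccEmb) (by simpa using hT)
    -- The last coordinate is outside the image of `T`, so `v` vanishes there.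
    have h0 : v (Fin.last n) = 0 := by
      by_contra hne
      have hmem : Fin.last n ∈ Supp v := by simpa [Supp] using hne
      rw [hs] at hmem
      simp [Fin.castSucc_ne_last] at hmem
    have hsnoc : (Fin.snoc (fun i : Fin n => v i.castSucc) 0 : Fin (n + 1) → Fin 3) = v := by
      rw [← h0]
      exact Fin.snoc_init_self v
    refine ⟨fun i => v i.castSucc, ⟨?_, ?_⟩, ?_⟩
    · rwa [Set.mem_ofPred_eq, hsnoc]
    · rw [← hsnoc, supp_snoc_zero] at hs
      exact Finset.map_injective _ hs
    · rintro u ⟨hu, rfl⟩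
      rw [← huniq _ ⟨hu, supp_snoc_zero u⟩]
      simp
  · simpa only [supp_snoc_zero, Finset.card_map] using hI.2 _ hu
  · exact hAdm.1 _ h₁ _ h₂ (hinj _ _ h12) hc.snoc_zero
  · exact hAdm.2 _ h₁ _ h₂ _ h₃ (hinj _ _ h12) (hinj _ _ h13) (hinj _ _ h23) hc.snoc_zero
end

section
/- Let S be an I(n, w) admissible set with 0 < w < n. Then the set S₂ = {(v₁,…,v_{n−1}) : (v₁,…,v_n) ∈ S, v_n ≠ 0} of restrictions to the first n−1 coordinates of those elements of S whose last coordinate is nonzero is an I(n−1, w−1) admissible set. -/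
/-- The set `T ∪ {n} ⊆ [n+1]`, for `T ⊆ [n]`. -/
def consLast {n : ℕ} (T : Finset (Fin n)) : Finset (Fin (n + 1)) :=
  insert (Fin.last n) (T.map Fin.castSuccEmb)

theorem castSucc_mem_consLast {n : ℕ} (T : Finset (Fin n)) (i : Fin n) :
    i.castSucc ∈ consLast T ↔ i ∈ T := by
  simp [consLast, Fin.castSucc_ne_last]

theorem last_mem_consLast {n : ℕ} (T : Finset (Fin n)) : Fin.last n ∈ consLast T := by
  simp [consLast]

theorem card_consLast {n : ℕ} (T : Finset (Fin n)) : (consLast T).card = T.card + 1 := by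
  rw [consLast, Finset.card_insert_of_notMem, Finset.card_map]
  simp [Fin.castSucc_ne_last]

theorem mem_supp {m : ℕ} (v : Fin m → Fin 3) (i : Fin m) : i ∈ Supp v ↔ v i ≠ 0 := by
  simp [Supp]

theorem supp_eq_cons {n : ℕ} (v : Fin (n + 1) → Fin 3) (h : v (Fin.last n) ≠ 0) :
    Supp v = consLast (Supp fun i : Fin n => v i.castSucc) := by
  ext i
  induction i using Fin.lastCases with
  | last => simp [mem_supp, h, last_mem_consLast]
  | cast i => rw [castSucc_mem_consLast, mem_supp, mem_supp]

theorem consLast_mono {n : ℕ} {T U : Finset (Fin n)} (h : T ⊆ U) : consLast T ⊆ consLast U :=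
  Finset.insert_subset_insert _ (Finset.map_subset_map.2 h)

theorem Clash2.lift {n : ℕ} {v₁ v₂ : Fin (n + 1) → Fin 3} (h₁ : v₁ (Fin.last n) ≠ 0)
    (h₂ : v₂ (Fin.last n) ≠ 0)
    (h : Clash2 (fun i : Fin n => v₁ i.castSucc) (fun i => v₂ i.castSucc)) : Clash2 v₁ v₂ := by
  rw [Clash2, supp_eq_cons v₁ h₁, supp_eq_cons v₂ h₂]
  exact h.imp consLast_mono consLast_mono

theorem Clash3.lift {n : ℕ} {v₁ v₂ v₃ : Fin (n + 1) → Fin 3} (h₁ : v₁ (Fin.last n) ≠ 0)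
    (h₂ : v₂ (Fin.last n) ≠ 0) (h₃ : v₃ (Fin.last n) ≠ 0)
    (h : Clash3 (fun i : Fin n => v₁ i.castSucc) (fun i => v₂ i.castSucc)
      (fun i => v₃ i.castSucc)) : Clash3 v₁ v₂ v₃ := by
  refine ⟨?_, ?_⟩
  · rintro ⟨i, hi⟩
    induction i using Fin.lastCases with
    | last => simp [ExactlyOneNonzero, h₁, h₂, h₃] at hi
    | cast i => exact h.1 ⟨i, hi⟩
  · rintro ⟨i, hi⟩
    induction i using Fin.lastCases with
    | last =>
      -- The three values are distinct elements of the two-element set `{1, 2}`.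
      omega
    | cast i => exact h.2 ⟨i, hi⟩

/-- If `S` is an `I(n+1, w)` admissible set with `0 < w < n+1`, then the set of restrictions
to the first `n` coordinates of those elements of `S` whose last coordinate is nonzero is an
`I(n, w-1)` admissible set. -/
theorem restrict_nonzero_coordinate {n w : ℕ} (hw : 0 < w) (hwn : w < n + 1)
    (S : Set (Fin (n + 1) → Fin 3)) (hI : IsISet (n + 1) w S) (hAdm : IsAdmissible S) :
    IsISet n (w - 1) {u : Fin n → Fin 3 |
        ∃ v ∈ S, v (Fin.last n) ≠ 0 ∧ u = fun i => v i.castSucc} ∧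
    IsAdmissible {u : Fin n → Fin 3 |
        ∃ v ∈ S, v (Fin.last n) ≠ 0 ∧ u = fun i => v i.castSucc} := by
  refine ⟨⟨?_, ?_⟩, ?_, ?_⟩
  · intro T hT
    obtain ⟨v, ⟨hvS, hv⟩, huniq⟩ := hI.1 (consLast T) (by rw [card_consLast]; omega)
    have hlast : v (Fin.last n) ≠ 0 := by
      rw [← mem_supp, hv]
      exact last_mem_consLast T
    refine ⟨fun i => v i.castSucc, ⟨⟨v, hvS, hlast, rfl⟩, ?_⟩, ?_⟩
    · ext i
      rw [← castSucc_mem_consLast T, ← hv, mem_supp, mem_supp]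
    · rintro _ ⟨⟨v', hv'S, hv', rfl⟩, hT'⟩
      rw [huniq v' ⟨hv'S, by rw [supp_eq_cons v' hv', hT']⟩]
  · rintro _ ⟨v, hvS, hv, rfl⟩
    have h := hI.2 v hvS
    rw [supp_eq_cons v hv, card_consLast] at h
    omega
  · rintro _ ⟨v₁, hS₁, h₁, rfl⟩ _ ⟨v₂, hS₂, h₂, rfl⟩ h₁₂ h
    exact hAdm.1 v₁ hS₁ v₂ hS₂ (by rintro rfl; exact h₁₂ rfl) (h.lift h₁ h₂)
  · rintro _ ⟨v₁, hS₁, h₁, rfl⟩ _ ⟨v₂, hS₂, h₂, rfl⟩ _ ⟨v₃, hS₃, h₃, rfl⟩ h₁₂ h₁₃ h₂₃ h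
    exact hAdm.2 v₁ hS₁ v₂ hS₂ v₃ hS₃ (by rintro rfl; exact h₁₂ rfl)
      (by rintro rfl; exact h₁₃ rfl) (by rintro rfl; exact h₂₃ rfl) (h.lift h₁ h₂ h₃)
end

section
/- If no I(m, w) admissible set exists (with 0 < w < m), then no I(m+1, w) admissible set exists and no I(m+1, w+1) admissible set exists. -/
/-- The vectors of `A` whose first coordinate is nonzero (if `b` is true) or zero (if `b` is false),
with that coordinate deleted. -/
def slice {m : ℕ} (b : Bool) (A : Set (Fin (m + 1) → Fin 3)) : Set (Fin m → Fin 3) :=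
  {v | ∃ a : Fin 3, (a ≠ 0 ↔ b = true) ∧ Fin.cons a v ∈ A}

/-- The support in `[m + 1]` of a vector whose first coordinate is nonzero exactly when `b` is true
and whose remaining coordinates have support `S`. -/
def liftSupp {m : ℕ} (b : Bool) (S : Finset (Fin m)) : Finset (Fin (m + 1)) :=
  if b then insert 0 (S.map (Fin.succEmb m)) else S.map (Fin.succEmb m)

lemma zero_mem_liftSupp {m : ℕ} (b : Bool) (S : Finset (Fin m)) :
    0 ∈ liftSupp b S ↔ b = true := by
  cases b <;> simp [liftSupp]

lemma succ_mem_liftSupp {m : ℕ} (b : Bool) (S : Finset (Fin m)) (i : Fin m) :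
    i.succ ∈ liftSupp b S ↔ i ∈ S := by
  cases b <;> simp [liftSupp]

lemma card_liftSupp {m : ℕ} (b : Bool) (S : Finset (Fin m)) :
    (liftSupp b S).card = S.card + b.toNat := by
  cases b <;> simp [liftSupp]

lemma supp_cons_eq_liftSupp {m : ℕ} {b : Bool} {a : Fin 3} {v : Fin m → Fin 3}
    {S : Finset (Fin m)} :
    Supp (Fin.cons a v : Fin (m + 1) → Fin 3) = liftSupp b S ↔
      (a ≠ 0 ↔ b = true) ∧ Supp v = S := by
  simp [Finset.ext_iff, Fin.forall_fin_succ, zero_mem_liftSupp, succ_mem_liftSupp, Supp]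

lemma slice_isISet {m w : ℕ} (b : Bool) {A : Set (Fin (m + 1) → Fin 3)}
    (hA : IsISet (m + 1) (w + b.toNat) A) : IsISet m w (slice b A) := by
  refine ⟨fun S hS => ?_, ?_⟩
  · obtain ⟨u, ⟨huA, hu⟩, huniq⟩ := hA.1 (liftSupp b S) (by rw [card_liftSupp, hS])
    rw [← Fin.cons_self_tail u] at huA hu
    have hu' := supp_cons_eq_liftSupp.1 hu
    refine ⟨Fin.tail u, ⟨⟨u 0, hu'.1, huA⟩, hu'.2⟩, ?_⟩
    rintro v ⟨⟨a, ha, hvA⟩, hv⟩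
    rw [← huniq _ ⟨hvA, supp_cons_eq_liftSupp.2 ⟨ha, hv⟩⟩, Fin.tail_cons]
  · rintro v ⟨a, ha, hvA⟩
    have hcard := hA.2 _ hvA
    rw [supp_cons_eq_liftSupp.2 ⟨ha, rfl⟩, card_liftSupp] at hcard
    exact Nat.add_right_cancel hcard

lemma clash2_cons {m : ℕ} {b : Bool} {a₁ a₂ : Fin 3} {v₁ v₂ : Fin m → Fin 3}
    (h₁ : a₁ ≠ 0 ↔ b = true) (h₂ : a₂ ≠ 0 ↔ b = true) (h : Clash2 v₁ v₂) :
    Clash2 (Fin.cons a₁ v₁ : Fin (m + 1) → Fin 3) (Fin.cons a₂ v₂) := by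
  have h₁₂ : a₁ ≠ 0 ↔ a₂ ≠ 0 := h₁.trans h₂.symm
  simp only [Clash2, Supp, Finset.subset_iff, Finset.mem_filter, Finset.mem_univ, true_and,
    Fin.forall_fin_succ, Fin.cons_zero, Fin.cons_succ] at h ⊢
  exact h.imp (⟨h₁₂.1, ·⟩) (⟨h₁₂.2, ·⟩)

/-- Prepending three values that are all zero or all nonzero preserves a clash: with only two
nonzero values available, the new coordinate cannot be pairwise distinct. -/
lemma clash3_cons {m : ℕ} {b : Bool} {a₁ a₂ a₃ : Fin 3} {v₁ v₂ v₃ : Fin m → Fin 3}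
    (h₁ : a₁ ≠ 0 ↔ b = true) (h₂ : a₂ ≠ 0 ↔ b = true) (h₃ : a₃ ≠ 0 ↔ b = true)
    (h : Clash3 v₁ v₂ v₃) :
    Clash3 (Fin.cons a₁ v₁ : Fin (m + 1) → Fin 3) (Fin.cons a₂ v₂) (Fin.cons a₃ v₃) := by
  have hone : ¬ ExactlyOneNonzero a₁ a₂ a₃ := by
    unfold ExactlyOneNonzero
    tauto
  have hdist : ¬ (a₁ ≠ a₂ ∧ a₁ ≠ a₃ ∧ a₂ ≠ a₃) := by
    clear hone h
    cases b <;> simp at h₁ h₂ h₃ <;> omega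
  simp only [Clash3, Fin.exists_fin_succ, Fin.cons_zero, Fin.cons_succ] at h ⊢
  exact ⟨not_or.2 ⟨hone, h.1⟩, not_or.2 ⟨hdist, h.2⟩⟩

lemma slice_isAdmissible {m : ℕ} (b : Bool) {A : Set (Fin (m + 1) → Fin 3)}
    (hA : IsAdmissible A) : IsAdmissible (slice b A) := by
  have hne {a a' : Fin 3} {v v' : Fin m → Fin 3} (h : v ≠ v') :
      (Fin.cons a v : Fin (m + 1) → Fin 3) ≠ Fin.cons a' v' :=
    fun h' => h (Fin.cons_injective2 h').2
  constructor
  · rintro v₁ ⟨a₁, h₁, hv₁⟩ v₂ ⟨a₂, h₂, hv₂⟩ h₁₂ hc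
    exact hA.1 _ hv₁ _ hv₂ (hne h₁₂) (clash2_cons h₁ h₂ hc)
  · rintro v₁ ⟨a₁, h₁, hv₁⟩ v₂ ⟨a₂, h₂, hv₂⟩ v₃ ⟨a₃, h₃, hv₃⟩ h₁₂ h₁₃ h₂₃ hc
    exact hA.2 _ hv₁ _ hv₂ _ hv₃ (hne h₁₂) (hne h₁₃) (hne h₂₃) (clash3_cons h₁ h₂ h₃ hc)

/-- If no `I(m, w)` admissible set exists (with `0 < w < m`), then no `I(m+1, w)` admissible
set exists and no `I(m+1, w+1)` admissible set exists. -/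
theorem no_ISet_step {m w : ℕ} (hw : 0 < w) (hwm : w < m)
    (h : ¬ ∃ A : Set (Fin m → Fin 3), IsISet m w A ∧ IsAdmissible A) :
    (¬ ∃ A : Set (Fin (m + 1) → Fin 3), IsISet (m + 1) w A ∧ IsAdmissible A) ∧
    (¬ ∃ A : Set (Fin (m + 1) → Fin 3), IsISet (m + 1) (w + 1) A ∧ IsAdmissible A) := by
  constructor
  · rintro ⟨A, hI, hA⟩
    exact h ⟨slice false A, slice_isISet false hI, slice_isAdmissible false hA⟩
  · rintro ⟨A, hI, hA⟩
    exact h ⟨slice true A, slice_isISet true hI, slice_isAdmissible true hA⟩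
end

section
/- For every m ≥ 2, the set of all vectors in {0,1,2}^m with exactly two nonzero coordinates whose nonzero values, read in increasing order of position, are 1 then 2, is an I(m, 2) admissible set. -/
/-- The vector with value `1` at `a`, value `2` at `b` and `0` elsewhere (if `a = b`, the value
there is `1`). -/
def arc {m : ℕ} (a b : Fin m) : Fin m → Fin 3 :=
  fun i => if i = a then 1 else if i = b then 2 else 0

lemma supp_arc {m : ℕ} (a b : Fin m) : Supp (arc a b) = {a, b} := by
  ext i
  simp [Supp, arc]
  grind

lemma sort_pair {m : ℕ} {a b : Fin m} (h : a < b) :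
    ({a, b} : Finset (Fin m)).sort (· ≤ ·) = [a, b] := by
  rw [Finset.sort_insert]
  · simp
  · simpa using h.le
  · simpa using h.ne

lemma nonzeroValues_eq_iff {m : ℕ} (v : Fin m → Fin 3) :
    nonzeroValues v = [1, 2] ↔ ∃ a b, a < b ∧ v = arc a b := by
  constructor
  · intro h
    obtain ⟨a, l, hl, ha, hl'⟩ := List.map_eq_cons_iff.1 h
    obtain ⟨b, l, rfl, hb, hl''⟩ := List.map_eq_cons_iff.1 hl'
    obtain rfl := List.map_eq_nil_iff.1 hl''
    have hs := (Supp v).sortedLT_sort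
    rw [hl] at hs
    refine ⟨a, b, by simpa using hs.pairwise, ?_⟩
    have hmem : ∀ i, v i ≠ 0 ↔ i = a ∨ i = b := fun i => by
      have : i ∈ (Supp v).sort (· ≤ ·) ↔ i ∈ [a, b] := by rw [hl]
      simpa [Supp] using this
    funext i
    have := hmem i
    unfold arc
    grind
  · rintro ⟨a, b, hab, rfl⟩
    rw [nonzeroValues, supp_arc, sort_pair hab]
    simp [arc, hab.ne']

lemma arc_eq_of_pair_eq {m : ℕ} {a b c d : Fin m} (hab : a < b) (hcd : c < d)
    (h : ({a, b} : Finset (Fin m)) = {c, d}) : arc a b = arc c d := by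
  have := congrArg (fun s : Finset (Fin m) => s.sort (· ≤ ·)) h
  simp only [sort_pair hab, sort_pair hcd, List.cons.injEq, and_true] at this
  rw [this.1, this.2]

/-- At an endpoint of one arc, the conditions of `Clash3` become conditions on which endpoints of
the other arcs coincide with it. These conditions are inconsistent for three distinct arcs. -/
lemma not_clash3_arc {m : ℕ} {a b c d e f : Fin m} (hab : a < b) (hcd : c < d) (hef : e < f)
    (h12 : arc a b ≠ arc c d) (h13 : arc a b ≠ arc e f) (h23 : arc c d ≠ arc e f) :
    ¬ Clash3 (arc a b) (arc c d) (arc e f) := by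
  rintro ⟨h1, h2⟩
  push Not at h1 h2
  have h12' : ¬ (a = c ∧ b = d) := by rintro ⟨rfl, rfl⟩; exact h12 rfl
  have h13' : ¬ (a = e ∧ b = f) := by rintro ⟨rfl, rfl⟩; exact h13 rfl
  have h23' : ¬ (c = e ∧ d = f) := by rintro ⟨rfl, rfl⟩; exact h23 rfl
  have A1 := h1 a; have A2 := h2 a
  have B1 := h1 b; have B2 := h2 b
  have C1 := h1 c; have C2 := h2 c
  have D1 := h1 d; have D2 := h2 d
  have E1 := h1 e; have E2 := h2 e
  have F1 := h1 f; have F2 := h2 f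
  clear h1 h2 h12 h13 h23
  simp only [ExactlyOneNonzero, arc] at *
  grind

/-- For every `m ≥ 2`, the set of all vectors in `{0,1,2}^m` whose nonzero values, read in
increasing order of position, are `1` then `2` is an `I(m, 2)` admissible set. -/
theorem type12_is_Im2 {m : ℕ} (hm : 2 ≤ m) :
    IsISet m 2 {v : Fin m → Fin 3 | nonzeroValues v = [1, 2]} ∧
    IsAdmissible {v : Fin m → Fin 3 | nonzeroValues v = [1, 2]} := by
  simp only [IsISet, IsAdmissible, Set.mem_ofPred_eq, nonzeroValues_eq_iff]
  refine ⟨⟨?_, ?_⟩, ?_, ?_⟩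
  · intro S hS
    obtain ⟨x, y, hxy, rfl⟩ := Finset.card_eq_two.1 hS
    obtain ⟨a, b, hab, hS'⟩ : ∃ a b, a < b ∧ ({x, y} : Finset (Fin m)) = {a, b} := by
      rcases hxy.lt_or_gt with h | h
      · exact ⟨x, y, h, rfl⟩
      · exact ⟨y, x, h, Finset.pair_comm x y⟩
    rw [hS']
    refine ⟨arc a b, ⟨⟨a, b, hab, rfl⟩, supp_arc a b⟩, ?_⟩
    rintro _ ⟨⟨c, d, hcd, rfl⟩, h⟩
    rw [supp_arc] at h
    exact arc_eq_of_pair_eq hcd hab h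
  · rintro _ ⟨a, b, hab, rfl⟩
    rw [supp_arc, Finset.card_pair hab.ne]
  · rintro _ ⟨a, b, hab, rfl⟩ _ ⟨c, d, hcd, rfl⟩ hne h
    rw [Clash2, supp_arc, supp_arc] at h
    have h1 := Finset.card_pair hab.ne
    have h2 := Finset.card_pair hcd.ne
    rcases h with h | h
    · exact hne (arc_eq_of_pair_eq hab hcd (Finset.eq_of_subset_of_card_le h (by omega)))
    · exact hne (arc_eq_of_pair_eq hcd hab (Finset.eq_of_subset_of_card_le h (by omega))).symm
  · rintro _ ⟨a, b, hab, rfl⟩ _ ⟨c, d, hcd, rfl⟩ _ ⟨e, f, hef, rfl⟩ h12 h13 h23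
    exact not_clash3_arc hab hcd hef h12 h13 h23
end

section
/- For every m ≥ 2, the set of vectors {v(i) : i ∈ [m]} ⊆ {0,1,2}^m defined by v(i)_j = 1 if i < j, v(i)_j = 2 if i > j, and v(i)_j = 0 if i = j, is an I(m, m−1) admissible set. -/
/-- The vector `v(i)`: the value is `2` before position `i`, `0` at `i` and `1` after it. -/
def stair {m : ℕ} (i : Fin m) : Fin m → Fin 3 :=
  fun j => if i < j then 1 else if j < i then 2 else 0

theorem stair_eq_zero_iff {m : ℕ} (i j : Fin m) : stair i j = 0 ↔ j = i := by
  unfold stair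
  rcases lt_trichotomy i j with h | h | h
  · simp [h, h.ne']
  · simp [h]
  · simp [h, h.not_gt, h.ne]

theorem supp_stair {m : ℕ} (i : Fin m) : Supp (stair i) = {i}ᶜ := by
  ext j
  simp [Supp, stair_eq_zero_iff]

/-- The coordinate at the middle index separates three vectors, whatever their order. -/
theorem exists_stair_distinct {m : ℕ} {a b c : Fin m} (hab : a ≠ b) (hac : a ≠ c) (hbc : b ≠ c) :
    ∃ i, stair a i ≠ stair b i ∧ stair a i ≠ stair c i ∧ stair b i ≠ stair c i := by
  -- The median of `a`, `b`, `c` is one of the three.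
  have h : (b < a ∧ a < c ∨ c < a ∧ a < b) ∨ (a < b ∧ b < c ∨ c < b ∧ b < a) ∨
      (a < c ∧ c < b ∨ b < c ∧ c < a) := by omega
  rcases h with h | h | h
  · refine ⟨a, ?_⟩
    rcases h with ⟨h₁, h₂⟩ | ⟨h₁, h₂⟩ <;> simp [stair, h₁, h₂, h₁.not_gt, h₂.not_gt]
  · refine ⟨b, ?_⟩
    rcases h with ⟨h₁, h₂⟩ | ⟨h₁, h₂⟩ <;> simp [stair, h₁, h₂, h₁.not_gt, h₂.not_gt]
  · refine ⟨c, ?_⟩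
    rcases h with ⟨h₁, h₂⟩ | ⟨h₁, h₂⟩ <;> simp [stair, h₁, h₂, h₁.not_gt, h₂.not_gt]

/-- For every `m ≥ 2`, the set of vectors `v(i)` with `v(i)_j = 1` if `i < j`, `2` if `i > j`
and `0` if `i = j` is an `I(m, m-1)` admissible set. -/
theorem staircase_is_Im_pred {m : ℕ} (hm : 2 ≤ m) :
    IsISet m (m - 1)
      {v : Fin m → Fin 3 | ∃ i : Fin m,
        v = fun j => if i < j then 1 else if j < i then 2 else 0} ∧
    IsAdmissible
      {v : Fin m → Fin 3 | ∃ i : Fin m,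
        v = fun j => if i < j then 1 else if j < i then 2 else 0} := by
  change IsISet m (m - 1) {v | ∃ i, v = stair i} ∧ IsAdmissible {v | ∃ i, v = stair i}
  refine ⟨⟨?_, ?_⟩, ?_, ?_⟩
  · intro S hS
    have hc : Sᶜ.card = 1 := by
      rw [Finset.card_compl, Fintype.card_fin, hS]
      omega
    obtain ⟨i, hi⟩ := Finset.card_eq_one.mp hc
    have hSi : S = {i}ᶜ := by rw [← hi, compl_compl]
    refine ⟨stair i, ⟨⟨i, rfl⟩, by rw [supp_stair, hSi]⟩, ?_⟩
    rintro _ ⟨⟨k, rfl⟩, hk⟩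
    rw [supp_stair, hSi, compl_inj_iff, Finset.singleton_inj] at hk
    rw [hk]
  · rintro _ ⟨i, rfl⟩
    rw [supp_stair, Finset.card_compl, Fintype.card_fin, Finset.card_singleton]
  · rintro _ ⟨a, rfl⟩ _ ⟨b, rfl⟩ hab hclash
    have hne : a ≠ b := fun h => hab (h ▸ rfl)
    simp only [Clash2, supp_stair, Finset.compl_subset_compl, Finset.singleton_subset_singleton]
      at hclash
    rcases hclash with h | h
    · exact hne h.symm
    · exact hne h
  · rintro _ ⟨a, rfl⟩ _ ⟨b, rfl⟩ _ ⟨c, rfl⟩ hab hac hbc hclash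
    exact hclash.2 (exists_stair_distinct (fun h => hab (h ▸ rfl)) (fun h => hac (h ▸ rfl))
      (fun h => hbc (h ▸ rfl)))
end
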